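/- Let T be a one-way deterministic parity transducer with n states. Then there exists a reversible two-way parity transducer T′ with at most 4n² states such that ⟦T′⟧ = ⟦T⟧ as partial functions from A^ω to B^ω. -/

import Mathlib

namespace Paper

/-! ## Two-way parity automata and transducers over infinite words.

An infinite word over an alphabet `A` is a function `ℕ → A`.
A configuration `⊢ u p v` with `w = u v` is encoded as a pair `(p, |u|) : Q × ℕ`.
The left end-marker `⊢` is encoded as `(none : Option A)`. -/

/-- A two-way automaton (without acceptance condition): states `Q` partitioned into forward
states (`fwd`) and backward states, an initial forward state, and a transition relation `Δ`
over `Q × (A ∪ {⊢}) × Q` where transitions on the end-marker `⊢` (encoded `none`) go from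
backward to forward states. -/
structure TwoWayAut (A : Type) where
  Q : Type
  finQ : Fintype Q
  fwd : Q → Prop
  init : Q
  init_fwd : fwd init
  Δ : Set (Q × Option A × Q)
  marker : ∀ p q, (p, (none : Option A), q) ∈ Δ → ¬ fwd p ∧ fwd q

attribute [instance] TwoWayAut.finQ

variable {A B : Type}

/-- `StepVia M w c t c'` : from configuration `c`, using transition `t`, the automaton `M`
reaches the successor configuration `c'` on input word `w`. -/
def StepVia (M : TwoWayAut A) (w : ℕ → A) (c : M.Q × ℕ)
    (t : M.Q × Option A × M.Q) (c' : M.Q × ℕ) : Prop :=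
  t ∈ M.Δ ∧ t.1 = c.1 ∧ t.2.2 = c'.1 ∧
    ((M.fwd c.1 ∧ t.2.1 = some (w c.2) ∧
        ((M.fwd c'.1 ∧ c'.2 = c.2 + 1) ∨ (¬ M.fwd c'.1 ∧ c'.2 = c.2))) ∨
     (¬ M.fwd c.1 ∧ 0 < c.2 ∧ t.2.1 = some (w (c.2 - 1)) ∧
        ((M.fwd c'.1 ∧ c'.2 = c.2) ∨ (¬ M.fwd c'.1 ∧ c'.2 = c.2 - 1))) ∨
     (¬ M.fwd c.1 ∧ c.2 = 0 ∧ t.2.1 = none ∧ c'.2 = 0))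

/-- The successor relation on configurations. -/
def Step (M : TwoWayAut A) (w : ℕ → A) (c c' : M.Q × ℕ) : Prop :=
  ∃ t, StepVia M w c t c'

/-- An infinite run of `M` on `w`, given by its configurations and the transitions taken. -/
def IsRun (M : TwoWayAut A) (w : ℕ → A) (cfg : ℕ → M.Q × ℕ)
    (tr : ℕ → M.Q × Option A × M.Q) : Prop :=
  cfg 0 = (M.init, 0) ∧ ∀ i, StepVia M w (cfg i) (tr i) (cfg (i + 1))

/-- The run reads the whole word: the prefix lengths are unbounded. -/
def ReadsWhole (M : TwoWayAut A) (cfg : ℕ → M.Q × ℕ) : Prop :=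
  ∀ n : ℕ, ∃ i, n ≤ (cfg i).2

/-- `t` occurs infinitely often in the sequence `tr`. -/
def InfOften {T : Type} (tr : ℕ → T) (t : T) : Prop :=
  ∀ n, ∃ i, n ≤ i ∧ tr i = t

def Deterministic (M : TwoWayAut A) : Prop :=
  ∀ p a q q', (p, a, q) ∈ M.Δ → (p, a, q') ∈ M.Δ → q = q'

def Codeterministic (M : TwoWayAut A) : Prop :=
  ∀ p p' a q, (p, a, q) ∈ M.Δ → (p', a, q) ∈ M.Δ → p = p'

def Reversible (M : TwoWayAut A) : Prop :=
  Deterministic M ∧ Codeterministic M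

def Oneway (M : TwoWayAut A) : Prop := ∀ q, M.fwd q

/-- A two-way parity automaton: a two-way automaton together with a finite family of
coloring functions (indexed by `CIdx`). -/
structure ParityAut (A : Type) extends TwoWayAut A where
  CIdx : Type
  finC : Fintype CIdx
  color : CIdx → (Q × Option A × Q) → ℕ

attribute [instance] ParityAut.finC

/-- The parity acceptance condition: for every coloring function, the minimal color of the
transitions taken infinitely often is even. -/
def ParityCond (M : ParityAut A) (tr : ℕ → M.Q × Option A × M.Q) : Prop :=
  ∀ c : M.CIdx, Even (sInf {m : ℕ | ∃ t, InfOften tr t ∧ M.color c t = m})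

/-- Acceptance of an infinite word by a two-way parity automaton. -/
def ParityAut.Accepts (M : ParityAut A) (w : ℕ → A) : Prop :=
  ∃ cfg tr, IsRun M.toTwoWayAut w cfg tr ∧ ReadsWhole M.toTwoWayAut cfg ∧ ParityCond M tr

/-- All colors of `M` (on its transitions) belong to `{0, …, ℓ-1}`. -/
def ColorsLt (M : ParityAut A) (ℓ : ℕ) : Prop :=
  ∀ (c : M.CIdx) t, t ∈ M.Δ → M.color c t < ℓ

/-- `l` is a prefix of the infinite word `x`. -/
def IsPrefixOf {C : Type} (l : List C) (x : ℕ → C) : Prop :=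
  ∀ (i : ℕ) (h : i < l.length), l.get ⟨i, h⟩ = x i

/-- Concatenation of the first `n` words of a sequence of finite words. -/
def prefixCat {C : Type} (f : ℕ → List C) : ℕ → List C
  | 0 => []
  | n + 1 => prefixCat f n ++ f n

/-- The concatenation of the sequence of finite words `f` is the infinite word `x`. -/
def FlattenTo {C : Type} (f : ℕ → List C) (x : ℕ → C) : Prop :=
  (∀ n, IsPrefixOf (prefixCat f n) x) ∧ ∀ m, ∃ n, m ≤ (prefixCat f n).length

/-- A two-way parity transducer: a two-way parity automaton (whose underlying automaton is
required to be deterministic via hypotheses) together with an output function. -/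
structure TwoWayTrans (A B : Type) extends ParityAut A where
  out : (Q × Option A × Q) → List B

/-- `T.Realizes w x` : the word `w` is accepted by (the deterministic transducer) `T`,
the produced output is infinite and equals `x`.  This is the graph of the partial function
`⟦T⟧ : A^ω ⇀ B^ω`. -/
def TwoWayTrans.Realizes (T : TwoWayTrans A B) (w : ℕ → A) (x : ℕ → B) : Prop :=
  ∃ cfg tr, IsRun T.toTwoWayAut w cfg tr ∧ ReadsWhole T.toTwoWayAut cfg ∧
    ParityCond T.toParityAut tr ∧ FlattenTo (fun i => T.out (tr i)) x

/-- A two-way Büchi transducer: accepting transitions `acc` instead of coloring functions. -/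
structure BuchiTrans (A B : Type) extends TwoWayAut A where
  acc : Set (Q × Option A × Q)
  out : (Q × Option A × Q) → List B

def BuchiTrans.Realizes (T : BuchiTrans A B) (w : ℕ → A) (x : ℕ → B) : Prop :=
  ∃ cfg tr, IsRun T.toTwoWayAut w cfg tr ∧ ReadsWhole T.toTwoWayAut cfg ∧
    (∀ n, ∃ i, n ≤ i ∧ tr i ∈ T.acc) ∧ FlattenTo (fun i => T.out (tr i)) x

/-- A two-way transducer with no acceptance condition. -/
structure NoAccTrans (A B : Type) extends TwoWayAut A where
  out : (Q × Option A × Q) → List B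

def NoAccTrans.Realizes (T : NoAccTrans A B) (w : ℕ → A) (x : ℕ → B) : Prop :=
  ∃ cfg tr, IsRun T.toTwoWayAut w cfg tr ∧ ReadsWhole T.toTwoWayAut cfg ∧
    FlattenTo (fun i => T.out (tr i)) x

/-! ## One-way parity automata, transducers, and copyless parity streaming string
transducers.  A one-way automaton has only forward states and never reads the end-marker,
so we use a simplified (equivalent) presentation. -/

structure OnewayAut (A : Type) where
  Q : Type
  finQ : Fintype Q
  init : Q
  Δ : Set (Q × A × Q)
  CIdx : Type
  finC : Fintype CIdx
  color : CIdx → (Q × A × Q) → ℕ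

attribute [instance] OnewayAut.finQ
attribute [instance] OnewayAut.finC

def OnewayDet (M : OnewayAut A) : Prop :=
  ∀ p a q q', (p, a, q) ∈ M.Δ → (p, a, q') ∈ M.Δ → q = q'

def OnewayRun (M : OnewayAut A) (w : ℕ → A) (s : ℕ → M.Q) : Prop :=
  s 0 = M.init ∧ ∀ i, (s i, w i, s (i + 1)) ∈ M.Δ

def OnewayParityCond (M : OnewayAut A) (tr : ℕ → M.Q × A × M.Q) : Prop :=
  ∀ c : M.CIdx, Even (sInf {m : ℕ | ∃ t, InfOften tr t ∧ M.color c t = m})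

def OnewayAut.Accepts (M : OnewayAut A) (w : ℕ → A) : Prop :=
  ∃ s, OnewayRun M w s ∧ OnewayParityCond M (fun i => (s i, w i, s (i + 1)))

def OnewayColorsLt (M : OnewayAut A) (ℓ : ℕ) : Prop :=
  ∀ (c : M.CIdx) t, t ∈ M.Δ → M.color c t < ℓ

/-- A one-way (deterministic) parity transducer. -/
structure OnewayTrans (A B : Type) extends OnewayAut A where
  out : (Q × A × Q) → List B

def OnewayTrans.Realizes (T : OnewayTrans A B) (w : ℕ → A) (x : ℕ → B) : Prop :=
  ∃ s, OnewayRun T.toOnewayAut w s ∧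
    OnewayParityCond T.toOnewayAut (fun i => (s i, w i, s (i + 1))) ∧
    FlattenTo (fun i => T.out (s i, w i, s (i + 1))) x

/-- Number of occurrences of `a` in the list `l` (classically). -/
noncomputable def occ {C : Type} (a : C) (l : List C) : ℕ :=
  l.countP fun x => @decide (x = a) (Classical.propDecidable _)

/-- A substitution `σ : R → (R ⊎ B)*` is copyless if every register occurs at most once in
the concatenation of all the `σ r'`. -/
def Copyless {R C : Type} [Fintype R] (σ : R → List (R ⊕ C)) : Prop :=
  ∀ r : R, (∑ r' : R, occ (Sum.inl r) (σ r')) ≤ 1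

/-- Applying an assignment `ν : R → B*` (extended to a morphism `(R ⊎ B)* → B*`). -/
def subApply {R C : Type} (ν : R → List C) : List (R ⊕ C) → List C
  | [] => []
  | Sum.inl r :: l => ν r ++ subApply ν l
  | Sum.inr b :: l => b :: subApply ν l

/-- A copyless parity streaming string transducer: a (deterministic) one-way parity
automaton with a finite set `R` of registers, a distinguished output register, and copyless
register updates, where the update of `outReg` always starts with `outReg`. -/
structure CPSST (A B : Type) extends OnewayAut A where
  R : Type
  finR : Fintype R
  outReg : R
  upd : (Q × A × Q) → R → List (R ⊕ B)
  copyless : ∀ t, @Copyless R B finR (upd t)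
  out_form : ∀ t, ∃ γ, upd t outReg = Sum.inl outReg :: γ

attribute [instance] CPSST.finR

/-- The register contents along a run: `ν_0 r = ε` and `ν_{i+1} = ν_i ∘ λ(t_i)`. -/
def regVal (T : CPSST A B) (w : ℕ → A) (s : ℕ → T.Q) : ℕ → T.R → List B
  | 0 => fun _ => []
  | i + 1 => fun r => subApply (regVal T w s i) (T.upd (s i, w i, s (i + 1)) r)

/-- `T.Realizes w x` : the (deterministic) CPSST `T` has an accepting run on `w` whose
output-register contents are unbounded with limit `x`. -/
def CPSST.Realizes (T : CPSST A B) (w : ℕ → A) (x : ℕ → B) : Prop :=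
  ∃ s, OnewayRun T.toOnewayAut w s ∧
    OnewayParityCond T.toOnewayAut (fun i => (s i, w i, s (i + 1))) ∧
    (∀ i, IsPrefixOf (regVal T w s i T.outReg) x) ∧
    (∀ m, ∃ i, m ≤ (regVal T w s i T.outReg).length)

/-- The one-way parity transducer with the same underlying automaton as the CPSST `T`,
which outputs on each transition the (copyless) substitution that `T` applies. -/
def enrich (T : CPSST A B) :
    OnewayTrans A {σ : T.R → List (T.R ⊕ B) // Copyless σ} where
  toOnewayAut := T.toOnewayAut
  out := fun t => [⟨T.upd t, T.copyless t⟩]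

/-! ## Merging forests -/

/-- A merging forest on `(Q⁺ ⊎ Q⁻, χ, ℓ)`: a finite rooted forest (given by a `parent` map
with no cycles) whose leaves (childless nodes) are injectively labeled in `Q⁻` and carry a
`χ`-tuple of integers `< ℓ`, whose roots are injectively labeled in `Q⁺`, and in which every
unary node (exactly one child) is a root. -/
structure MForest (Qp Qm χ : Type) (ℓ : ℕ) where
  V : Type
  finV : Fintype V
  parent : V → Option V
  acyc : ∀ v : V, ¬ Relation.TransGen (fun a b => parent a = some b) v v
  leafLab : V → Qm
  rootLab : V → Qp
  tup : V → χ → ℕ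
  tup_lt : ∀ v, (∀ u, parent u ≠ some v) → ∀ c, tup v c < ℓ
  leaf_inj : ∀ u v, (∀ u', parent u' ≠ some u) → (∀ v', parent v' ≠ some v) →
    leafLab u = leafLab v → u = v
  root_inj : ∀ u v, parent u = none → parent v = none → rootLab u = rootLab v → u = v
  unary_root : ∀ v : V, (∃! u, parent u = some v) → parent v = none

attribute [instance] MForest.finV

/-- Isomorphism of merging forests: a bijection of the nodes commuting with `parent` and
preserving the leaf labels, the leaf tuples and the root labels. -/
def MFIso {Qp Qm χ : Type} {ℓ : ℕ} (F G : MForest Qp Qm χ ℓ) : Prop :=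
  ∃ e : F.V ≃ G.V,
    (∀ v, G.parent (e v) = Option.map e (F.parent v)) ∧
    (∀ v, (∀ u, F.parent u ≠ some v) →
      F.leafLab v = G.leafLab (e v) ∧ ∀ c, F.tup v c = G.tup (e v) c) ∧
    (∀ v, F.parent v = none → F.rootLab v = G.rootLab (e v))

end Paper

namespace Paper

/-! The runs of a deterministic one-way transducer from all states at all positions merge but never
split, so they form a forest, and the run to be simulated is its trunk. A head that walks along the
outline of a planar drawing of this forest is reversible, as the outline can be walked in both
directions, but it explores the subtrees attached to the trunk without knowing where the trunk is.
Hence two heads follow the outline, one on each side of the trunk: they cross the strip of a letter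
together, and a head that is led back while exploring a subtree moves alone. They surround the same
node exactly when this node is on the trunk, which is when the output is produced. The pair moves
forwards if and only if its heads are on opposite sides of their nodes, so the state of the two-way
transducer consists of two nodes and two sides.

By reversibility, and since no step leads back to the initial configuration, the configurations of a
run are pairwise distinct. Hence the position of the heads tends to infinity, and every infinite run
reads the whole word. -/

section Fiber

variable {Q : Type*} [LinearOrder Q] {R : Q → Q → Prop} {s : Bool} {p q r : Q}

/-- The linear order of `Q` seen from one of its two ends: `Beyond true` is `<`, `Beyond false`
is `>`. -/
def Beyond (s : Bool) (p q : Q) : Prop := if s then p < q else q < p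

@[simp]
lemma beyond_not : Beyond (!s) p q ↔ Beyond s q p := by cases s <;> simp [Beyond]

instance : IsStrictTotalOrder Q (Beyond s) := by
  cases s with
  | true => exact inferInstanceAs (IsStrictTotalOrder Q (· < ·))
  | false => exact inferInstanceAs (IsStrictTotalOrder Q (· > ·))

/-- Among the `R`-children of `r`, the outermost one on side `s` is `p`. -/
def IsOutermost (R : Q → Q → Prop) (s : Bool) (p r : Q) : Prop :=
  R p r ∧ ∀ x, R x r → ¬ Beyond s p x

/-- The sibling that follows `p` on side `s`, among the `R`-children of a common parent, is `q`. -/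
def IsNextSibling (R : Q → Q → Prop) (s : Bool) (p q : Q) : Prop :=
  ∃ r, R p r ∧ R q r ∧ Beyond s p q ∧ ∀ x, R x r → Beyond s p x → ¬ Beyond s x q

/-- The node `r` has no `R`-child. -/
def IsLeaf (R : Q → Q → Prop) (r : Q) : Prop := ∀ p, ¬ R p r

lemma IsNextSibling.symm (h : IsNextSibling R s p q) : IsNextSibling R (!s) q p := by
  obtain ⟨r, hp, hq, hpq, hmin⟩ := h
  refine ⟨r, hq, hp, by simpa, fun x hx hqx hxp ↦ ?_⟩
  rw [beyond_not] at hqx hxp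
  exact hmin x hx hxp hqx

lemma IsNextSibling.eq {q' : Q} (hR : Relator.RightUnique R) (h : IsNextSibling R s p q)
    (h' : IsNextSibling R s p q') : q = q' := by
  obtain ⟨r, hp, hq, hpq, hmin⟩ := h
  obtain ⟨r', hp', hq', hpq', hmin'⟩ := h'
  obtain rfl := hR hp hp'
  exact Std.Trichotomous.trichotomous q q' (hmin' q hq hpq) (hmin q' hq' hpq')

lemma IsOutermost.eq {p' : Q} (h : IsOutermost R s p r) (h' : IsOutermost R s p' r) : p = p' :=
  Std.Trichotomous.trichotomous p p' (h.2 p' h'.1) (h'.2 p h.1)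

lemma IsOutermost.not_isNextSibling (hR : Relator.RightUnique R) (h : IsOutermost R s p r) :
    ¬ IsNextSibling R s p q := by
  rintro ⟨r', hp, hq, hpq, -⟩
  obtain rfl := hR hp h.1
  exact h.2 q hq hpq

variable (s) in
lemma exists_isNextSibling_or_isOutermost [Finite Q] (h : R p r) :
    (∃ q, IsNextSibling R s p q) ∨ IsOutermost R s p r := by
  refine or_iff_not_imp_right.2 fun hout ↦ ?_
  obtain ⟨x, hx⟩ : ∃ x, R x r ∧ Beyond s p x := by simpa [IsOutermost, h] using hout
  obtain ⟨q, ⟨hq, hpq⟩, hmin⟩ := (Finite.wellFounded_of_trans_of_irrefl (Beyond s)).has_min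
    {x | R x r ∧ Beyond s p x} ⟨x, hx⟩
  exact ⟨q, r, h, hq, hpq, fun y hy hpy ↦ hmin y ⟨hy, hpy⟩⟩

variable (R s r) in
lemma isLeaf_or_exists_isOutermost [Finite Q] : IsLeaf R r ∨ ∃ p, IsOutermost R s p r := by
  refine or_iff_not_imp_left.2 fun hleaf ↦ ?_
  obtain ⟨x, hx⟩ : ∃ x, R x r := by simpa [IsLeaf] using hleaf
  obtain ⟨p, hp, hmax⟩ := (Finite.wellFounded_of_trans_of_irrefl (Beyond !s)).has_min
    {x | R x r} ⟨x, hx⟩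
  exact ⟨p, hp, fun y hy ↦ by simpa using hmax y hy⟩

end Fiber

section Outline

variable {Q : Type*}

/-- A head of the reversible transducer: a node together with one of its two sides. -/
abbrev Head (Q : Type*) := Q × Bool

/-- The states of the reversible transducer: two heads, which follow the outline together. -/
abbrev HeadPair (Q : Type*) := Head Q × Head Q

/-- The places on the border of the strip of the forest in which a given letter is read: a head on
a node before that letter (`inl`) or on a node after it (`inr`). -/
abbrev Port (Q : Type*) := Head Q ⊕ Head Q

/-- The two heads move forward (rightwards) when they are on opposite sides of their nodes. -/
def Forward (x : HeadPair Q) : Prop := x.1.2 ≠ x.2.2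

instance (x : HeadPair Q) : Decidable (Forward x) :=
  inferInstanceAs (Decidable (x.1.2 ≠ x.2.2))

/-- The ports at which the heads of a state enter the strip they are about to read. -/
def source (x : HeadPair Q) : Port Q × Port Q :=
  if Forward x then (.inl x.1, .inl x.2) else (.inr x.1, .inr x.2)

/-- The ports at which the heads of a state have left the strip they have just read. -/
def target (x : HeadPair Q) : Port Q × Port Q :=
  if Forward x then (.inr x.1, .inr x.2) else (.inl x.1, .inl x.2)

lemma source_injective : Function.Injective (source (Q := Q)) := by
  intro x y h
  unfold source at h
  split_ifs at h <;> simp_all [Prod.ext_iff]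

lemma target_injective : Function.Injective (target (Q := Q)) := by
  intro x y h
  unfold target at h
  split_ifs at h <;> simp_all [Prod.ext_iff]

variable [LinearOrder Q] {R : Q → Q → Prop}

/-- The outline of the forest inside the strip of a letter whose edges are `R`: it joins in pairs
the ports of the strip. -/
inductive Outline (R : Q → Q → Prop) : Port Q → Port Q → Prop
  | climb {s p r} : IsOutermost R s p r → Outline R (.inl (p, s)) (.inr (r, s))
  | descend {s p r} : IsOutermost R s p r → Outline R (.inr (r, s)) (.inl (p, s))
  | hop {s p q} : IsNextSibling R s p q → Outline R (.inl (p, s)) (.inl (q, !s))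
  | turn {s r} : IsLeaf R r → Outline R (.inr (r, s)) (.inr (r, !s))

lemma Outline.symm {P P' : Port Q} (h : Outline R P P') : Outline R P' P := by
  cases h with
  | climb h => exact .descend h
  | descend h => exact .climb h
  | hop h => simpa using Outline.hop h.symm
  | turn h => simpa using Outline.turn (s := !_) h

lemma Outline.rightUnique (hR : Relator.RightUnique R) : Relator.RightUnique (Outline R) := by
  intro P P₁ P₂ h₁ h₂
  cases h₁ with
  | climb h₁ =>
    cases h₂ with
    | climb h₂ => rw [hR h₁.1 h₂.1]
    | hop h₂ => exact absurd h₂ (h₁.not_isNextSibling hR)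
  | descend h₁ =>
    cases h₂ with
    | descend h₂ => rw [h₁.eq h₂]
    | turn h₂ => exact absurd h₁.1 (h₂ _)
  | hop h₁ =>
    cases h₂ with
    | climb h₂ => exact absurd h₁ (h₂.not_isNextSibling hR)
    | hop h₂ => rw [h₁.eq hR h₂]
  | turn h₁ =>
    cases h₂ with
    | descend h₂ => exact absurd h₂.1 (h₁ _)
    | turn => rfl

lemma exists_outline_inl [Finite Q] (s : Bool) {p r : Q} (h : R p r) :
    ∃ P, Outline R (.inl (p, s)) P := by
  rcases exists_isNextSibling_or_isOutermost s h with ⟨q, hq⟩ | hout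
  exacts [⟨_, .hop hq⟩, ⟨_, .climb hout⟩]

variable (R) in
lemma exists_outline_inr [Finite Q] (h : Head Q) : ∃ P, Outline R (.inr h) P := by
  rcases isLeaf_or_exists_isOutermost R h.2 h.1 with hleaf | ⟨p, hp⟩
  exacts [⟨_, .turn hleaf⟩, ⟨_, .descend hp⟩]

/-- A joint move of two heads along the outline: they cross the strip together, but as long as one
of them is led back to its own border of the strip, only one such head moves, the first one if
possible. -/
inductive PairStep (R : Q → Q → Prop) : Port Q × Port Q → Port Q × Port Q → Prop
  | both {P P' S S'} : Outline R P P' → P.isLeft ≠ P'.isLeft →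
      Outline R S S' → S.isLeft ≠ S'.isLeft → PairStep R (P, S) (P', S')
  | fst {P P' S} : Outline R P P' → P.isLeft = P'.isLeft → PairStep R (P, S) (P', S)
  | snd {P P' S S'} : Outline R P P' → P.isLeft ≠ P'.isLeft →
      Outline R S S' → S.isLeft = S'.isLeft → PairStep R (P, S) (P, S')

lemma PairStep.symm {c c' : Port Q × Port Q} (h : PairStep R c c') : PairStep R c' c := by
  cases h with
  | both hP hP' hS hS' => exact .both hP.symm hP'.symm hS.symm hS'.symm
  | fst hP hP' => exact .fst hP.symm hP'.symm
  | snd hP hP' hS hS' => exact .snd hP hP' hS.symm hS'.symm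

lemma PairStep.rightUnique (hR : Relator.RightUnique R) : Relator.RightUnique (PairStep R) := by
  have huniq := @Outline.rightUnique _ _ _ hR
  intro c c₁ c₂ h₁ h₂
  cases h₁ <;> cases h₂ <;> grind [Relator.RightUnique]

lemma PairStep.leftUnique (hR : Relator.RightUnique R) : Relator.LeftUnique (PairStep R) :=
  fun _ _ _ h₁ h₂ ↦ PairStep.rightUnique hR h₁.symm h₂.symm

lemma exists_pairStep {P P' S S' : Port Q} (hP : Outline R P P') (hS : Outline R S S') :
    ∃ c, PairStep R (P, S) c := by
  by_cases hPP' : P.isLeft = P'.isLeft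
  · exact ⟨_, .fst hP hPP'⟩
  by_cases hSS' : S.isLeft = S'.isLeft
  · exact ⟨_, .snd hP hPP' hS hSS'⟩
  · exact ⟨_, .both hP hPP' hS hSS'⟩

lemma PairStep.preserves {Φ Ψ : Port Q → Prop} (hΦ : ∀ P P', Outline R P P' → Φ P → Φ P')
    (hΨ : ∀ P P', Outline R P P' → Ψ P → Ψ P') {c c' : Port Q × Port Q} (h : PairStep R c c')
    (hc : Φ c.1 ∧ Ψ c.2) : Φ c'.1 ∧ Ψ c'.2 := by
  cases h with
  | both hP _ hS _ => exact ⟨hΦ _ _ hP hc.1, hΨ _ _ hS hc.2⟩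
  | fst hP _ => exact ⟨hΦ _ _ hP hc.1, hc.2⟩
  | snd _ _ hS _ => exact ⟨hc.1, hΨ _ _ hS hc.2⟩

/-- A head changes its side exactly when it is led back to the border it comes from. -/
lemma PairStep.exists_eq_target {x : HeadPair Q} {c : Port Q × Port Q}
    (h : PairStep R (source x) c) : ∃ y, c = target y := by
  refine ⟨(c.1.elim id id, c.2.elim id id), ?_⟩
  obtain ⟨⟨p, s⟩, q, t⟩ := x
  by_cases hst : s = t <;>
    simp only [source, target, Forward, ne_eq, hst, not_true, not_false_eq_true, if_true,
      if_false] at h ⊢ <;>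
    cases h with
    | both hP hP' hS hS' => cases hP <;> cases hS <;> simp_all
    | fst hP hP' => cases hP <;> simp_all
    | snd hP hP' hS hS' => cases hS <;> simp_all

end Outline

section TwoWay

open Filter

variable {A : Type} {M : TwoWayAut A} {w : ℕ → A}

/-- The letters around the positions of the head: position `k` lies between the letters `tape w k`
and `tape w (k + 1)`, and `tape w 0` is the left end-marker. -/
def tape (w : ℕ → A) : ℕ → Option A
  | 0 => none
  | j + 1 => some (w j)

lemma stepVia_iff {c d : M.Q × ℕ} {t : M.Q × Option A × M.Q} :
    StepVia M w c t d ↔ ∃ j, t = (c.1, tape w j, d.1) ∧ t ∈ M.Δ ∧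
      (M.fwd c.1 ∧ j = c.2 + 1 ∨ ¬ M.fwd c.1 ∧ j = c.2) ∧
      (M.fwd d.1 ∧ j = d.2 ∨ ¬ M.fwd d.1 ∧ j = d.2 + 1) := by
  obtain ⟨p, k⟩ := c
  obtain ⟨q, l⟩ := d
  obtain ⟨p', a, q'⟩ := t
  simp only [StepVia]
  constructor
  · rintro ⟨ht, rfl, rfl, ⟨hp, rfl, h⟩ | ⟨hp, hk, rfl, h⟩ | ⟨hp, rfl, rfl, h⟩⟩
    · exact ⟨k + 1, rfl, ht, .inl ⟨hp, rfl⟩, by grind⟩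
    · obtain ⟨k, rfl⟩ : ∃ k', k = k' + 1 := ⟨k - 1, by grind⟩
      exact ⟨k + 1, rfl, ht, .inr ⟨hp, rfl⟩, by grind⟩
    · exact ⟨0, rfl, ht, .inr ⟨hp, rfl⟩, .inl ⟨(M.marker _ _ ht).2, h.symm⟩⟩
  · rintro ⟨j, heq, ht, hj, hj'⟩
    obtain ⟨rfl, rfl, rfl⟩ : p' = p ∧ a = tape w j ∧ q' = q := by simpa using heq
    refine ⟨ht, rfl, rfl, ?_⟩
    cases j with
    | zero => grind [M.marker _ _ ht, tape]
    | succ j => grind [tape]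

lemma StepVia.left_unique (hM : Codeterministic M) {c c' d : M.Q × ℕ}
    {t t' : M.Q × Option A × M.Q} (h : StepVia M w c t d) (h' : StepVia M w c' t' d) :
    c = c' := by
  obtain ⟨j, rfl, ht, hj, hd⟩ := stepVia_iff.1 h
  obtain ⟨j', rfl, ht', hj', hd'⟩ := stepVia_iff.1 h'
  obtain rfl : j = j' := by grind
  have hfst : c.1 = c'.1 := hM _ _ _ _ ht ht'
  rw [← hfst] at hj'
  exact Prod.ext hfst (by grind)

lemma IsRun.injective (hM : Codeterministic M) {cfg : ℕ → M.Q × ℕ}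
    {tr : ℕ → M.Q × Option A × M.Q} (hrun : IsRun M w cfg tr)
    (hinit : ∀ c t, ¬ StepVia M w c t (M.init, 0)) : Function.Injective cfg := by
  suffices h : ∀ i d, cfg i ≠ cfg (i + (d + 1)) by
    intro i j hij
    by_contra hne
    rcases Nat.lt_or_gt_of_ne hne with hlt | hlt
    · obtain ⟨d, rfl⟩ := Nat.exists_eq_add_of_lt hlt
      exact h i d hij
    · obtain ⟨d, rfl⟩ := Nat.exists_eq_add_of_lt hlt
      exact h j d hij.symm
  intro i d
  induction i with
  | zero =>
    intro h
    have hstep := hrun.2 d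
    rw [← Nat.zero_add (d + 1), ← h, hrun.1] at hstep
    exact hinit _ _ hstep
  | succ i ih =>
    intro h
    have hstep := hrun.2 (i + (d + 1))
    rw [Nat.add_right_comm, ← h] at hstep
    exact ih ((hrun.2 i).left_unique hM hstep)

lemma tendsto_snd_atTop_of_injective {S : Type*} [Finite S] {cfg : ℕ → S × ℕ}
    (h : Function.Injective cfg) : Tendsto (fun i ↦ (cfg i).2) atTop atTop := by
  rw [← Nat.cofinite_eq_atTop]
  refine Tendsto.comp (.cofinite_of_finite_preimage_singleton fun k ↦ ?_) h.tendsto_cofinite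
  exact (Set.finite_range fun q : S ↦ (q, k)).subset (by rintro ⟨q, -⟩ rfl; exact ⟨q, rfl⟩)

lemma exists_isRun_of_invariant {Inv : M.Q × ℕ → Prop} (hinit : Inv (M.init, 0))
    (hstep : ∀ c, Inv c → ∃ t d, StepVia M w c t d ∧ Inv d) : ∃ cfg tr, IsRun M w cfg tr := by
  choose t d ht hd using fun c : {c // Inv c} ↦ hstep c c.2
  let cfg : ℕ → {c // Inv c} := Nat.rec ⟨_, hinit⟩ fun _ c ↦ ⟨d c, hd c⟩
  exact ⟨fun i ↦ (cfg i).1, fun i ↦ t (cfg i), rfl, fun i ↦ ht (cfg i)⟩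

end TwoWay

section Forest

open Relation

variable {Q : Type*} {E : ℕ → Q → Q → Prop} {q₀ : Q} {x y z m : ℕ × Q} {d d' s : Bool}

/-- The edges of the forest on the nodes `(level, state)`, those between the levels `j` and `j + 1`
being given by `E j`; they go from children to parents. -/
def Edge (E : ℕ → Q → Q → Prop) (x y : ℕ × Q) : Prop := y.1 = x.1 + 1 ∧ E x.1 x.2 y.2

/-- The node `x` belongs to the subtree below `y`. -/
abbrev Reach (E : ℕ → Q → Q → Prop) : ℕ × Q → ℕ × Q → Prop := ReflTransGen (Edge E)

/-- The trunk of the forest is the branch that starts at level `0` in `q₀`. -/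
def Trunk (E : ℕ → Q → Q → Prop) (q₀ : Q) (x : ℕ × Q) : Prop := Reach E (0, q₀) x

lemma edge_mk {j : ℕ} {p r : Q} (h : E j p r) : Edge E (j, p) (j + 1, r) := ⟨rfl, h⟩

lemma edge_rightUnique (hE : ∀ j, Relator.RightUnique (E j)) : Relator.RightUnique (Edge E) :=
  fun _ _ _ h h' ↦ Prod.ext (h.1.trans h'.1.symm) (hE _ h.2 h'.2)

lemma Reach.le (h : Reach E x y) : x.1 ≤ y.1 := by
  induction h with
  | refl => rfl
  | tail _ hyz ih => have := hyz.1; omega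

lemma Reach.eq_of_le (h : Reach E x y) (hle : y.1 ≤ x.1) : x = y := by
  rcases h.cases_head with rfl | ⟨z, hxz, hzy⟩
  · rfl
  · have := hxz.1
    have := Reach.le hzy
    omega

lemma Reach.eq_or_of_edge (hE : ∀ j, Relator.RightUnique (E j)) (h : Reach E x y)
    (hxz : Edge E x z) : x = y ∨ Reach E z y := by
  rcases h.cases_head with rfl | ⟨z', hxz', hzy⟩
  · exact .inl rfl
  · exact .inr (edge_rightUnique hE hxz hxz' ▸ hzy)

lemma Trunk.eq (hE : ∀ j, Relator.RightUnique (E j)) (hx : Trunk E q₀ x) (hy : Trunk E q₀ y)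
    (hxy : x.1 = y.1) : x = y := by
  rcases ReflTransGen.total_of_right_unique (edge_rightUnique hE) hx hy with h | h
  · exact Reach.eq_of_le h hxy.ge
  · exact (Reach.eq_of_le h hxy.le).symm

lemma Trunk.exists_edge {j : ℕ} {r : Q} (h : Trunk E q₀ (j + 1, r)) :
    ∃ p, Trunk E q₀ (j, p) ∧ E j p r := by
  rcases ReflTransGen.cases_tail h with heq | ⟨⟨i, p⟩, hp, hi, hpr⟩
  · simp at heq
  · obtain rfl : i = j := by simpa using hi.symm
    exact ⟨p, hp, hpr⟩

lemma Trunk.exists_of_le {l : ℕ} (h : Trunk E q₀ x) (hl : l ≤ x.1) :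
    ∃ p, Trunk E q₀ (l, p) := by
  obtain ⟨k, r⟩ := x
  replace hl : l ≤ k := hl
  induction k, hl using Nat.le_induction generalizing r with
  | base => exact ⟨r, h⟩
  | succ k _ ih =>
    obtain ⟨p, hp, -⟩ := h.exists_edge
    exact ih p hp

variable [LinearOrder Q]

/-- The node `x` belongs to a subtree that is attached to the trunk on side `d`: the root `y` of
this subtree is a sibling of a node `m` of the trunk. -/
def OffTrunk (E : ℕ → Q → Q → Prop) (q₀ : Q) (d : Bool) (x : ℕ × Q) : Prop :=
  ∃ y m z, Reach E x y ∧ Trunk E q₀ m ∧ Edge E m z ∧ Edge E y z ∧ Beyond d m.2 y.2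

lemma OffTrunk.of_edge (h : OffTrunk E q₀ d y) (hxy : Edge E x y) : OffTrunk E q₀ d x := by
  obtain ⟨y', m, z, hy', h⟩ := h
  exact ⟨y', m, z, .head hxy hy', h⟩

lemma offTrunk_of_beyond {j : ℕ} {p q r : Q} (hp : Trunk E q₀ (j, p)) (hpr : E j p r)
    (hqr : E j q r) (hpq : Beyond d p q) : OffTrunk E q₀ d (j, q) :=
  ⟨_, _, _, .refl, hp, edge_mk hpr, edge_mk hqr, hpq⟩

lemma OffTrunk.cases_of_edge (hE : ∀ j, Relator.RightUnique (E j)) {j : ℕ} {p r : Q}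
    (h : OffTrunk E q₀ d (j, p)) (hpr : E j p r) :
    (∃ m, Trunk E q₀ (j, m) ∧ E j m r ∧ Beyond d m p) ∨ OffTrunk E q₀ d (j + 1, r) := by
  obtain ⟨y, ⟨i, m⟩, z, hpy, hm, hmz, hyz, hmy⟩ := h
  rcases hpy.eq_or_of_edge hE (edge_mk hpr) with rfl | hry
  · obtain rfl := edge_rightUnique hE hyz (edge_mk hpr)
    obtain rfl : j = i := by simpa using hmz.1
    exact .inl ⟨m, hm, hmz.2, hmy⟩
  · exact .inr ⟨y, (i, m), z, hry, hm, hmz, hyz, hmy⟩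

lemma OffTrunk.exists_edge (h : OffTrunk E q₀ d x) : ∃ y, Edge E x y := by
  obtain ⟨y, m, z, hxy, -, -, hyz, -⟩ := h
  rcases hxy.cases_head with rfl | ⟨x', hx', -⟩
  exacts [⟨z, hyz⟩, ⟨x', hx'⟩]

lemma OffTrunk.not_trunk (hE : ∀ j, Relator.RightUnique (E j)) (h : OffTrunk E q₀ d x) :
    ¬ Trunk E q₀ x := by
  obtain ⟨y, m, z, hxy, hm, hmz, hyz, hmy⟩ := h
  intro hx
  obtain rfl : m = y := hm.eq hE (.trans hx hxy) (by have := hmz.1; have := hyz.1; omega)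
  exact irrefl_of (Beyond d) _ hmy

lemma OffTrunk.side_eq (hE : ∀ j, Relator.RightUnique (E j)) (h : OffTrunk E q₀ d x)
    (h' : OffTrunk E q₀ d' x) : d = d' := by
  obtain ⟨y, m, z, hxy, hm, hmz, hyz, hmy⟩ := h
  obtain ⟨y', m', z', hxy', hm', hmz', hyz', hmy'⟩ := h'
  have hoff : OffTrunk E q₀ d y := ⟨y, m, z, .refl, hm, hmz, hyz, hmy⟩
  have hoff' : OffTrunk E q₀ d' y' := ⟨y', m', z', .refl, hm', hmz', hyz', hmy'⟩
  obtain rfl : y = y' := by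
    rcases ReflTransGen.total_of_right_unique (edge_rightUnique hE) hxy hxy' with hyy | hyy
    · rcases Reach.eq_or_of_edge hE hyy hyz with heq | hz
      · exact heq
      · exact absurd (.trans (.tail hm hmz) hz) (hoff'.not_trunk hE)
    · rcases Reach.eq_or_of_edge hE hyy hyz' with heq | hz
      · exact heq.symm
      · exact absurd (.trans (.tail hm' hmz') hz) (hoff.not_trunk hE)
  obtain rfl : m = m' :=
    hm.eq hE hm' (by have := hmz.1; have := hyz.1; have := hmz'.1; have := hyz'.1; omega)
  by_contra hne
  obtain rfl : d' = !d := by cases d <;> cases d' <;> simp_all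
  exact asymm_of (Beyond d) hmy (beyond_not.1 hmy')

/-- The head `x.2`, placed on a node at level `x.1`, is on the part of the outline that follows
the trunk on its side `d`. -/
def Flank (E : ℕ → Q → Q → Prop) (q₀ : Q) (d : Bool) (x : ℕ × Head Q) : Prop :=
  Trunk E q₀ (x.1, x.2.1) ∧ x.2.2 = d ∨ OffTrunk E q₀ d (x.1, x.2.1)

/-- The head `x.2`, placed on a node at level `x.1`, is in the subtree below `y`. -/
def InSubtree (E : ℕ → Q → Q → Prop) (y : ℕ × Q) (x : ℕ × Head Q) : Prop :=
  Reach E (x.1, x.2.1) y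

/-- The head at a port of the strip between the levels `j` and `j + 1`, with its level. -/
def place (j : ℕ) : Port Q → ℕ × Head Q
  | .inl h => (j, h)
  | .inr h => (j + 1, h)

lemma Flank.climb (hE : ∀ j, Relator.RightUnique (E j)) {j : ℕ} {p r : Q}
    (hpr : IsOutermost (E j) s p r) (h : Flank E q₀ d (j, (p, s))) :
    Flank E q₀ d (j + 1, (r, s)) := by
  rcases h with ⟨hp, rfl⟩ | hoff
  · exact .inl ⟨.tail hp (edge_mk hpr.1), rfl⟩
  rcases hoff.cases_of_edge hE hpr.1 with ⟨m, hm, hmr, hmp⟩ | hr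
  · refine .inl ⟨.tail hm (edge_mk hmr), ?_⟩
    by_contra hne
    obtain rfl : s = !d := by cases s <;> cases d <;> simp_all
    exact hpr.2 m hmr (beyond_not.2 hmp)
  · exact .inr hr

lemma Flank.descend {j : ℕ} {p r : Q} (hpr : IsOutermost (E j) s p r)
    (h : Flank E q₀ d (j + 1, (r, s))) : Flank E q₀ d (j, (p, s)) := by
  rcases h with ⟨hr, rfl⟩ | hoff
  · obtain ⟨m, hm, hmr⟩ := hr.exists_edge
    rcases trichotomous_of (Beyond s) m p with hmp | rfl | hpm
    · exact .inr (offTrunk_of_beyond hm hmr hpr.1 hmp)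
    · exact .inl ⟨hm, rfl⟩
    · exact absurd hpm (hpr.2 m hmr)
  · exact .inr (hoff.of_edge (edge_mk hpr.1))

lemma Flank.hop (hE : ∀ j, Relator.RightUnique (E j)) {j : ℕ} {p q : Q}
    (hpq : IsNextSibling (E j) s p q) (h : Flank E q₀ d (j, (p, s))) :
    Flank E q₀ d (j, (q, !s)) := by
  obtain ⟨r, hpr, hqr, hlt, hbetween⟩ := hpq
  rcases h with ⟨hp, rfl⟩ | hoff
  · exact .inr (offTrunk_of_beyond hp hpr hqr hlt)
  rcases hoff.cases_of_edge hE hpr with ⟨m, hm, hmr, hmp⟩ | hr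
  · by_cases hsd : s = d
    · subst hsd
      exact .inr (offTrunk_of_beyond hm hmr hqr (trans_of (Beyond s) hmp hlt))
    · obtain rfl : d = !s := by cases s <;> cases d <;> simp_all
      rcases trichotomous_of (Beyond !s) m q with hmq | rfl | hqm
      · exact .inr (offTrunk_of_beyond hm hmr hqr hmq)
      · exact .inl ⟨hm, rfl⟩
      · exact absurd (beyond_not.1 hqm) (hbetween m hmr (beyond_not.1 hmp))
  · exact .inr (hr.of_edge (edge_mk hqr))

lemma Flank.turn {j : ℕ} {r : Q} (hr : IsLeaf (E j) r) (h : Flank E q₀ d (j + 1, (r, s))) :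
    Flank E q₀ d (j + 1, (r, !s)) := by
  rcases h with ⟨htrunk, -⟩ | hoff
  · obtain ⟨p, -, hpr⟩ := htrunk.exists_edge
    exact absurd hpr (hr p)
  · exact .inr hoff

lemma Flank.outline (hE : ∀ j, Relator.RightUnique (E j)) {j : ℕ} (P P' : Port Q)
    (hP : Outline (E j) P P') (h : Flank E q₀ d (place j P)) : Flank E q₀ d (place j P') := by
  cases hP with
  | climb hpr => exact h.climb hE hpr
  | descend hpr => exact h.descend hpr
  | hop hpq => exact h.hop hE hpq
  | turn hr => exact h.turn hr

lemma InSubtree.outline (hE : ∀ j, Relator.RightUnique (E j)) {j : ℕ} (hj : j < y.1)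
    (P P' : Port Q) (hP : Outline (E j) P P') (h : InSubtree E y (place j P)) :
    InSubtree E y (place j P') := by
  have hup : ∀ {p r}, E j p r → Reach E (j, p) y → Reach E (j + 1, r) y := by
    intro p r hpr hp
    refine (hp.eq_or_of_edge hE (edge_mk hpr)).resolve_left ?_
    rintro rfl
    exact hj.false
  cases hP with
  | climb hpr => exact hup hpr.1 h
  | descend hpr => exact .head (edge_mk hpr.1) h
  | hop hpq =>
    obtain ⟨r, hpr, hqr, -⟩ := hpq
    exact .head (edge_mk hqr) (hup hpr h)
  | turn => exact h

lemma Flank.trunk_and_sides_eq (hE : ∀ j, Relator.RightUnique (E j)) {k : ℕ} {p : Q} {t : Bool}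
    (hd : d ≠ d') (h : Flank E q₀ d (k, (p, s))) (h' : Flank E q₀ d' (k, (p, t))) :
    Trunk E q₀ (k, p) ∧ s = d ∧ t = d' := by
  rcases h with ⟨hp, hs⟩ | hoff <;> rcases h' with ⟨hp', ht⟩ | hoff'
  · exact ⟨hp, hs, ht⟩
  · exact absurd hp (hoff'.not_trunk hE)
  · exact absurd hp' (hoff.not_trunk hE)
  · exact absurd (hoff.side_eq hE hoff') hd

lemma Flank.exists_trunk {x : ℕ × Head Q} {l : ℕ} (h : Flank E q₀ d x) (hl : l ≤ x.1) :
    ∃ p, Trunk E q₀ (l, p) := by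
  rcases h with ⟨hx, -⟩ | ⟨y, m, z, hxy, hm, hmz, hyz, -⟩
  · exact hx.exists_of_le hl
  · have hle := Reach.le hxy
    exact hm.exists_of_le (by have := hmz.1; have := hyz.1; omega)

lemma Flank.exists_edge (hE : ∀ j, Relator.RightUnique (E j))
    (htrunk : ∀ k, ∃ p, Trunk E q₀ (k, p)) {k : ℕ} {h : Head Q} (hk : Flank E q₀ d (k, h)) :
    ∃ r, E k h.1 r := by
  rcases hk with ⟨hp, -⟩ | hoff
  · obtain ⟨r, hr⟩ := htrunk (k + 1)
    obtain ⟨p, hp', hpr⟩ := hr.exists_edge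
    obtain rfl : p = h.1 := congrArg Prod.snd (hp'.eq hE hp rfl)
    exact ⟨r, hpr⟩
  · obtain ⟨y, -, hy⟩ := hoff.exists_edge
    exact ⟨y.2, hy⟩

lemma Flank.side_eq_of_level_zero (hE : ∀ j, Relator.RightUnique (E j))
    (h₀ : ∀ p r, E 0 p r → p = q₀) {h : Head Q} (hk : Flank E q₀ d (0, h)) : h.2 = d := by
  rcases hk with ⟨-, hs⟩ | hoff
  · exact hs
  · obtain ⟨y, -, hy⟩ := hoff.exists_edge
    obtain rfl := h₀ _ _ hy
    exact absurd .refl (hoff.not_trunk hE)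

end Forest

section Sequences

open Filter

variable {C : Type}

lemma infOften_iff_frequently {S : Type} {f : ℕ → S} {t : S} :
    InfOften f t ↔ ∃ᶠ i in atTop, f i = t :=
  frequently_atTop.symm

lemma flattenTo_iff {f : ℕ → List C} {x : ℕ → C} :
    FlattenTo f x ↔ (∀ l ∈ Set.range (prefixCat f), IsPrefixOf l x) ∧
      ∀ m, ∃ l ∈ Set.range (prefixCat f), m ≤ l.length := by
  simp [FlattenTo]

open Classical in
lemma count_range_of_strictMono {g : ℕ → ℕ} (hg : StrictMono g) (k : ℕ) :
    Nat.count (· ∈ Set.range g) (g k) = k := by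
  have himage : {i ∈ Finset.range (g k) | i ∈ Set.range g} = (Finset.range k).image g := by
    ext i
    simp only [Finset.mem_filter, Finset.mem_range, Set.mem_range, Finset.mem_image]
    constructor
    · rintro ⟨hi, l, rfl⟩
      exact ⟨l, hg.lt_iff_lt.1 hi, rfl⟩
    · rintro ⟨l, hl, rfl⟩
      exact ⟨hg hl, l, rfl⟩
  rw [Nat.count_eq_card_filter_range, himage, Finset.card_image_of_injective _ hg.injective,
    Finset.card_range]

open Classical in
lemma prefixCat_extend {g : ℕ → ℕ} (hg : StrictMono g) (f : ℕ → List C) (n : ℕ) :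
    prefixCat (Function.extend g f fun _ ↦ []) n =
      prefixCat f (Nat.count (· ∈ Set.range g) n) := by
  induction n with
  | zero => rfl
  | succ n ih =>
    by_cases hn : n ∈ Set.range g
    · rw [Nat.count_succ, if_pos hn, prefixCat, prefixCat, ih]
      obtain ⟨k, rfl⟩ := hn
      rw [hg.injective.extend_apply, count_range_of_strictMono hg]
    · rw [Nat.count_succ, if_neg hn, prefixCat, ih, Function.extend_apply' _ _ _ hn,
        List.append_nil, Nat.add_zero]

lemma flattenTo_extend_iff {g : ℕ → ℕ} (hg : StrictMono g) {f : ℕ → List C} {x : ℕ → C} :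
    FlattenTo (Function.extend g f fun _ ↦ []) x ↔ FlattenTo f x := by
  classical
  suffices h : Set.range (prefixCat (Function.extend g f fun _ ↦ [])) =
      Set.range (prefixCat f) by
    rw [flattenTo_iff, flattenTo_iff, h]
  refine Set.Subset.antisymm ?_ ?_
  · rintro _ ⟨n, rfl⟩
    exact ⟨_, (prefixCat_extend hg f n).symm⟩
  · rintro _ ⟨k, rfl⟩
    exact ⟨g k, by rw [prefixCat_extend hg, count_range_of_strictMono hg]⟩

lemma sInf_eq_sInf_of_subset {S S' : Set ℕ} (hsub : S ⊆ S') (h : ∀ m' ∈ S', ∃ m ∈ S, m ≤ m') :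
    sInf S = sInf S' := by
  rcases S.eq_empty_or_nonempty with rfl | hS
  · rw [show S' = ∅ from Set.eq_empty_of_forall_notMem fun m' hm' ↦ by simpa using h m' hm']
  refine le_antisymm ?_ (csInf_le_csInf' hS hsub)
  obtain ⟨m, hm, hle⟩ := h _ (Nat.sInf_mem (hS.mono hsub))
  exact (Nat.sInf_le hm).trans hle

lemma InfOften.exists_triple {Q A : Type} [Finite Q] {s : ℕ → Q} {w : ℕ → A} {a : A}
    (ha : InfOften w a) : ∃ p r, InfOften (fun i ↦ (s i, w i, s (i + 1))) (p, a, r) := by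
  have hfreq : ∃ᶠ i in atTop, ∃ pr : Q × Q, (s i, w i, s (i + 1)) = (pr.1, a, pr.2) :=
    (infOften_iff_frequently.1 ha).mono fun i hi ↦ ⟨(s i, s (i + 1)), by rw [hi]⟩
  obtain ⟨pr, hpr⟩ := frequently_exists.1 hfreq
  exact ⟨_, _, infOften_iff_frequently.2 hpr⟩

end Sequences

section Automaton

variable {A : Type} {M : OnewayAut A} {w : ℕ → A}

/-- The moves of `M` on a letter, where the end-marker `none` is read as a loop on the initial
state. -/
def OnewayAut.moves (M : OnewayAut A) : Option A → M.Q → M.Q → Prop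
  | none => fun p r ↦ p = M.init ∧ r = M.init
  | some a => fun p r ↦ (p, a, r) ∈ M.Δ

/-- The edges of the forest of all runs of `M` on `w`. Its level `0` is the one before the
end-marker, so that the state of a run after `k` letters is on level `k + 1`. -/
abbrev OnewayAut.forest (M : OnewayAut A) (w : ℕ → A) (j : ℕ) : M.Q → M.Q → Prop :=
  M.moves (tape w j)

/-- The state of the two heads when they surround the node `p`. -/
def surround {Q : Type} (p : Q) : HeadPair Q := ((p, true), (p, false))

/-- The two-way automaton whose two heads follow the outline of the forest of `M` on both sides of
its trunk. -/
def OnewayAut.outlineAut (M : OnewayAut A) [LinearOrder M.Q] : TwoWayAut A where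
  Q := HeadPair M.Q
  finQ := inferInstance
  fwd := Forward
  init := surround M.init
  init_fwd := by simp [Forward, surround]
  Δ := {t | PairStep (M.moves t.2.1) (source t.1) (target t.2.2) ∧
    (t.2.1 = none → ¬ Forward t.1 ∧ Forward t.2.2)}
  marker _ _ h := h.2 rfl

lemma OnewayDet.moves_rightUnique (hM : OnewayDet M) (a : Option A) :
    Relator.RightUnique (M.moves a) := by
  cases a with
  | none => exact fun p q r hq hr ↦ hq.2.trans hr.2.symm
  | some a => exact fun p q r hq hr ↦ hM p a q r hq hr

lemma OnewayDet.forest_rightUnique (hM : OnewayDet M) (w : ℕ → A) (j : ℕ) :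
    Relator.RightUnique (M.forest w j) :=
  hM.moves_rightUnique (tape w j)

lemma trunk_init : Trunk (M.forest w) M.init (1, M.init) := .single (edge_mk ⟨rfl, rfl⟩)

lemma onewayRun_iff_trunk (hM : OnewayDet M) {s : ℕ → M.Q} :
    OnewayRun M w s ↔ ∀ k, Trunk (M.forest w) M.init (k + 1, s k) := by
  constructor
  · intro hs k
    induction k with
    | zero => exact hs.1.symm ▸ trunk_init
    | succ k ih => exact .tail ih (edge_mk (hs.2 k))
  · intro hs
    refine ⟨?_, fun i ↦ ?_⟩
    · obtain ⟨p, -, hp⟩ := (hs 0).exists_edge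
      exact hp.2
    · obtain ⟨p, hp, hpr⟩ := (hs (i + 1)).exists_edge
      obtain rfl : p = s i :=
        congrArg Prod.snd (hp.eq (hM.forest_rightUnique w) (hs i) rfl)
      exact hpr

variable [LinearOrder M.Q]

lemma OnewayDet.reversible_outlineAut (hM : OnewayDet M) : Reversible M.outlineAut := by
  refine ⟨fun p a q q' h h' ↦ ?_, fun p p' a q h h' ↦ ?_⟩
  · exact target_injective (PairStep.rightUnique (hM.moves_rightUnique a) h.1 h'.1)
  · exact source_injective (PairStep.leftUnique (hM.moves_rightUnique a) h.1 h'.1)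

/-- The heads of a configuration satisfy `Φ` and `Ψ` respectively, when they are placed on the level
of the position of the configuration. -/
def HeadsSatisfy {Q : Type} (Φ Ψ : ℕ × Head Q → Prop) (c : HeadPair Q × ℕ) : Prop :=
  Φ (c.2 + 1, c.1.1) ∧ Ψ (c.2 + 1, c.1.2)

lemma headsSatisfy_iff_source {Q : Type} {Φ Ψ : ℕ × Head Q → Prop} {c : HeadPair Q × ℕ}
    {j : ℕ} (h : Forward c.1 ∧ j = c.2 + 1 ∨ ¬ Forward c.1 ∧ j = c.2) :
    HeadsSatisfy Φ Ψ c ↔ Φ (place j (source c.1).1) ∧ Ψ (place j (source c.1).2) := by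
  rcases h with ⟨hf, rfl⟩ | ⟨hf, rfl⟩ <;> simp [HeadsSatisfy, source, hf, place]

lemma headsSatisfy_iff_target {Q : Type} {Φ Ψ : ℕ × Head Q → Prop} {d : HeadPair Q × ℕ}
    {j : ℕ} (h : Forward d.1 ∧ j = d.2 ∨ ¬ Forward d.1 ∧ j = d.2 + 1) :
    HeadsSatisfy Φ Ψ d ↔ Φ (place j (target d.1).1) ∧ Ψ (place j (target d.1).2) := by
  rcases h with ⟨hf, rfl⟩ | ⟨hf, rfl⟩ <;> simp [HeadsSatisfy, target, hf, place]

lemma HeadsSatisfy.of_stepVia {Φ Ψ : ℕ × Head M.Q → Prop} {c d : HeadPair M.Q × ℕ}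
    {t : HeadPair M.Q × Option A × HeadPair M.Q}
    (hΦ : ∀ j ≤ c.2 + 1, ∀ P P', Outline (M.forest w j) P P' → Φ (place j P) → Φ (place j P'))
    (hΨ : ∀ j ≤ c.2 + 1, ∀ P P', Outline (M.forest w j) P P' → Ψ (place j P) → Ψ (place j P'))
    (h : StepVia M.outlineAut w c t d) (hc : HeadsSatisfy Φ Ψ c) : HeadsSatisfy Φ Ψ d := by
  obtain ⟨j, rfl, ht, hj, hd⟩ := stepVia_iff.1 h
  have hle : j ≤ c.2 + 1 := by omega
  rw [headsSatisfy_iff_source hj] at hc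
  rw [headsSatisfy_iff_target hd]
  exact PairStep.preserves (Φ := fun P ↦ Φ (place j P)) (Ψ := fun P ↦ Ψ (place j P))
    (hΦ j hle) (hΨ j hle) ht.1 hc

/-- The invariant of the outline automaton: its heads follow the trunk on both sides. -/
def OnewayAut.Flanked (M : OnewayAut A) [LinearOrder M.Q] (w : ℕ → A) :
    HeadPair M.Q × ℕ → Prop :=
  HeadsSatisfy (Flank (M.forest w) M.init true) (Flank (M.forest w) M.init false)

lemma flanked_init : M.Flanked w (surround M.init, 0) :=
  ⟨.inl ⟨trunk_init, rfl⟩, .inl ⟨trunk_init, rfl⟩⟩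

lemma OnewayAut.Flanked.of_stepVia (hM : OnewayDet M) {c d : HeadPair M.Q × ℕ}
    {t : HeadPair M.Q × Option A × HeadPair M.Q} (hc : M.Flanked w c)
    (h : StepVia M.outlineAut w c t d) : M.Flanked w d :=
  have hE := hM.forest_rightUnique w
  HeadsSatisfy.of_stepVia (fun _ _ ↦ Flank.outline hE) (fun _ _ ↦ Flank.outline hE) h hc

lemma OnewayAut.Flanked.exists_outline_source (hM : OnewayDet M)
    (htrunk : ∀ k, ∃ p, Trunk (M.forest w) M.init (k, p)) {c : HeadPair M.Q × ℕ}
    (hc : M.Flanked w c) {j : ℕ} (hj : Forward c.1 ∧ j = c.2 + 1 ∨ ¬ Forward c.1 ∧ j = c.2) :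
    (∃ P, Outline (M.forest w j) (source c.1).1 P) ∧
      ∃ P, Outline (M.forest w j) (source c.1).2 P := by
  have hE := hM.forest_rightUnique w
  rcases hj with ⟨hf, rfl⟩ | ⟨hf, rfl⟩
  · rw [source, if_pos hf]
    obtain ⟨r, hr⟩ := hc.1.exists_edge hE htrunk
    obtain ⟨r', hr'⟩ := hc.2.exists_edge hE htrunk
    exact ⟨exists_outline_inl _ hr, exists_outline_inl _ hr'⟩
  · rw [source, if_neg hf]
    exact ⟨exists_outline_inr _ _, exists_outline_inr _ _⟩

lemma OnewayAut.Flanked.exists_stepVia (hM : OnewayDet M)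
    (htrunk : ∀ k, ∃ p, Trunk (M.forest w) M.init (k, p)) {c : HeadPair M.Q × ℕ}
    (hc : M.Flanked w c) : ∃ t d, StepVia M.outlineAut w c t d := by
  have hE := hM.forest_rightUnique w
  obtain ⟨j, hj⟩ : ∃ j, Forward c.1 ∧ j = c.2 + 1 ∨ ¬ Forward c.1 ∧ j = c.2 := by
    by_cases hf : Forward c.1 <;> simp [hf]
  obtain ⟨⟨P, hP⟩, P', hP'⟩ := hc.exists_outline_source hM htrunk hj
  obtain ⟨_, hpair⟩ := exists_pairStep hP hP'
  obtain ⟨y, rfl⟩ := PairStep.exists_eq_target (x := c.1) hpair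
  have hy : j = 0 → Forward y := by
    rintro rfl
    by_contra hf
    have hflank := PairStep.preserves (Φ := fun P ↦ Flank _ _ _ (place 0 P))
      (Ψ := fun P ↦ Flank _ _ _ (place 0 P)) (Flank.outline hE) (Flank.outline hE) hpair
      ((headsSatisfy_iff_source hj).1 hc)
    rw [target, if_neg hf] at hflank
    have htrue := hflank.1.side_eq_of_level_zero hE fun p r h ↦ h.1
    have hfalse := hflank.2.side_eq_of_level_zero hE fun p r h ↦ h.1
    exact hf (by simp [Forward, htrue, hfalse])
  obtain ⟨k, hk⟩ : ∃ k, Forward y ∧ j = k ∨ ¬ Forward y ∧ j = k + 1 := by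
    by_cases hf : Forward y
    · exact ⟨j, .inl ⟨hf, rfl⟩⟩
    · exact ⟨j - 1, .inr ⟨hf, by have := mt hy hf; omega⟩⟩
  refine ⟨_, (y, k), stepVia_iff.2 ⟨j, rfl, ⟨hpair, fun hnone ↦ ?_⟩, hj, hk⟩⟩
  obtain rfl : j = 0 := by cases j <;> simp_all [tape]
  exact ⟨fun hf ↦ by simp [hf] at hj, hy rfl⟩

lemma not_stepVia_init (c : HeadPair M.Q × ℕ)
    (t : HeadPair M.Q × Option A × HeadPair M.Q) :
    ¬ StepVia M.outlineAut w c t (surround M.init, 0) := by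
  intro h
  obtain ⟨j, rfl, ht, hj, hd⟩ := stepVia_iff.1 h
  have hinit : Forward (surround M.init) := M.outlineAut.init_fwd
  obtain rfl : j = 0 := by simpa [show M.outlineAut.fwd (surround M.init) from hinit] using hd
  have hout : ∀ s, IsOutermost (M.moves none) s M.init M.init := by
    refine fun s ↦ ⟨⟨rfl, rfl⟩, fun x hx ↦ ?_⟩
    obtain rfl := hx.1
    exact irrefl_of (Beyond s) _
  have hpair : PairStep (M.moves none) (.inl (M.init, true), .inl (M.init, false))
      (target (surround M.init)) := by
    rw [target, if_pos hinit]
    exact .both (.climb (hout true)) (by simp) (.climb (hout false)) (by simp)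
  have hsource := PairStep.leftUnique (fun _ _ _ h h' ↦ h.2.trans h'.2.symm) ht.1 hpair
  simp [source, (ht.2 rfl).1] at hsource

end Automaton

section Transducer

open Filter

variable {A B : Type}

/-- A transition of the outline automaton of `M` simulates the transition `s` of `M` when it starts
from the heads that surround the source of `s` and reads the same letter. -/
def OnewayAut.Simulates (M : OnewayAut A)
    (t : HeadPair M.Q × Option A × HeadPair M.Q) (s : M.Q × A × M.Q) : Prop :=
  s ∈ M.Δ ∧ t.1 = surround s.1 ∧ t.2.1 = some s.2.1

open Classical in
/-- The transition of `M` simulated by a transition of its outline automaton, if there is one. -/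
noncomputable def OnewayAut.simulated (M : OnewayAut A)
    (t : HeadPair M.Q × Option A × HeadPair M.Q) : Option (M.Q × A × M.Q) :=
  if h : ∃ s, M.Simulates t s then some h.choose else none

/-- The largest color of the transitions that read `a`. As one of them occurs infinitely often as
soon as `a` does, a transition with this color has no effect on the parity condition. -/
def OnewayAut.maxColor (M : OnewayAut A) (c : M.CIdx) (a : A) : ℕ :=
  Finset.univ.sup fun pr : M.Q × M.Q ↦ M.color c (pr.1, a, pr.2)

/-- The transducer on the outline automaton of `T` that has the color and the output of `T` on the
transitions that simulate one of `T`, and a neutral color and no output on the other ones. -/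
noncomputable def OnewayTrans.outlineTrans (T : OnewayTrans A B) [LinearOrder T.Q] :
    TwoWayTrans A B where
  toTwoWayAut := T.outlineAut
  CIdx := T.CIdx
  finC := T.finC
  color c t := (T.simulated t).elim (t.2.1.elim 0 (T.maxColor c)) (T.color c)
  out t := (T.simulated t).elim [] T.out

/-- The transitions taken by a one-way run with states `s` on `w`. -/
abbrev transitions {Q : Type} (s : ℕ → Q) (w : ℕ → A) (i : ℕ) : Q × A × Q :=
  (s i, w i, s (i + 1))

variable {M : OnewayAut A} {w : ℕ → A} {s : ℕ → M.Q}
  {tr : ℕ → HeadPair M.Q × Option A × HeadPair M.Q}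

lemma simulated_eq_some_iff (hM : OnewayDet M)
    {t : HeadPair M.Q × Option A × HeadPair M.Q} {u : M.Q × A × M.Q} :
    M.simulated t = some u ↔ M.Simulates t u := by
  have huniq : ∀ {u u'}, M.Simulates t u → M.Simulates t u' → u = u' := by
    rintro ⟨p, a, r⟩ ⟨p', a', r'⟩ ⟨h, hp, ha⟩ ⟨h', hp', ha'⟩
    obtain rfl : p = p' := congrArg (·.1.1) (hp.symm.trans hp')
    obtain rfl : a = a' := Option.some_injective _ (ha.symm.trans ha')
    rw [hM _ _ _ _ h h']
  unfold OnewayAut.simulated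
  split_ifs with h
  · exact ⟨fun heq ↦ Option.some_injective _ heq ▸ h.choose_spec,
      fun hu ↦ congrArg some (huniq h.choose_spec hu)⟩
  · exact ⟨nofun, fun hu ↦ (h ⟨_, hu⟩).elim⟩

lemma maxColor_le {c : M.CIdx} (p r : M.Q) (a : A) : M.color c (p, a, r) ≤ M.maxColor c a :=
  Finset.le_sup (f := fun pr : M.Q × M.Q ↦ M.color c (pr.1, a, pr.2)) (Finset.mem_univ (p, r))

lemma infOften_of_simulated {g : ℕ → ℕ} (hg : StrictMono g) {τ : ℕ → M.Q × A × M.Q}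
    (hsim : M.simulated ∘ tr = Function.extend g (some ∘ τ) fun _ ↦ none)
    {t : HeadPair M.Q × Option A × HeadPair M.Q} {u : M.Q × A × M.Q}
    (ht : InfOften tr t) (htu : M.simulated t = some u) : InfOften τ u := by
  intro n
  obtain ⟨i, hi, rfl⟩ := ht (g n)
  have hext := (congrFun hsim i).symm.trans htu
  obtain ⟨k, rfl⟩ : i ∈ Set.range g := by
    by_contra hrange
    rw [Function.extend_apply' _ _ _ hrange] at hext
    exact Option.some_ne_none _ hext.symm
  rw [hg.injective.extend_apply] at hext
  exact ⟨k, hg.le_iff_le.1 hi, Option.some_injective _ hext⟩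

variable [LinearOrder M.Q] {cfg : ℕ → HeadPair M.Q × ℕ}

lemma OnewayDet.run_injective (hM : OnewayDet M) (hrun : IsRun M.outlineAut w cfg tr) :
    Function.Injective cfg :=
  hrun.injective hM.reversible_outlineAut.2 not_stepVia_init

lemma OnewayDet.tendsto_position (hM : OnewayDet M) (hrun : IsRun M.outlineAut w cfg tr) :
    Tendsto (fun i ↦ (cfg i).2) atTop atTop :=
  tendsto_snd_atTop_of_injective (hM.run_injective hrun)

lemma OnewayDet.flanked_run (hM : OnewayDet M) (hrun : IsRun M.outlineAut w cfg tr) (i : ℕ) :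
    M.Flanked w (cfg i) := by
  induction i with
  | zero => exact hrun.1 ▸ flanked_init
  | succ i ih => exact ih.of_stepVia hM (hrun.2 i)

lemma OnewayDet.exists_onewayRun (hM : OnewayDet M) (hrun : IsRun M.outlineAut w cfg tr) :
    ∃ s, OnewayRun M w s := by
  suffices h : ∀ k, ∃ p, Trunk (M.forest w) M.init (k + 1, p) by
    choose s hs using h
    exact ⟨s, (onewayRun_iff_trunk hM).2 hs⟩
  intro k
  obtain ⟨i, hi⟩ := ((hM.tendsto_position hrun).eventually_ge_atTop k).exists
  exact (hM.flanked_run hrun i).1.exists_trunk (Nat.succ_le_succ hi)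

lemma OnewayRun.exists_isRun (hM : OnewayDet M) (hs : OnewayRun M w s) :
    ∃ cfg tr, IsRun M.outlineAut w cfg tr := by
  have htrunk : ∀ k, ∃ p, Trunk (M.forest w) M.init (k, p) := fun k ↦
    ((onewayRun_iff_trunk hM).1 hs k).exists_of_le k.le_succ
  refine exists_isRun_of_invariant (Inv := M.Flanked w) flanked_init fun c hc ↦ ?_
  obtain ⟨t, d, h⟩ := hc.exists_stepVia hM htrunk
  exact ⟨t, d, h, hc.of_stepVia hM h⟩

/-- Until they reach the level of `s k`, the heads stay in the subtree below this node. -/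
lemma OnewayRun.cfg_eq_surround (hM : OnewayDet M) (hs : OnewayRun M w s)
    (hrun : IsRun M.outlineAut w cfg tr) {k i : ℕ} (hi : k ≤ (cfg i).2)
    (hbefore : ∀ l < i, (cfg l).2 < k) : cfg i = (surround (s k), k) := by
  have hE := hM.forest_rightUnique w
  let Φ := InSubtree (M.forest w) (k + 1, s k)
  have hsub : ∀ l ≤ i, HeadsSatisfy Φ Φ (cfg l) := by
    intro l hl
    induction l with
    | zero =>
      have hinit : Reach (M.forest w) (1, M.init) (k + 1, s k) := by
        have hloop : Edge (M.forest w) (0, M.init) (1, M.init) := edge_mk ⟨rfl, rfl⟩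
        exact (((onewayRun_iff_trunk hM).1 hs k).eq_or_of_edge hE hloop).resolve_left (by simp)
      rw [hrun.1]
      exact ⟨hinit, hinit⟩
    | succ l ih =>
      have hk := hbefore l hl
      have hout : ∀ j ≤ (cfg l).2 + 1, ∀ P P', Outline (M.forest w j) P P' →
          Φ (place j P) → Φ (place j P') := fun j hj ↦ InSubtree.outline hE (by simp; omega)
      exact (ih (Nat.le_of_succ_le hl)).of_stepVia hout hout (hrun.2 l)
  have hflank := hM.flanked_run hrun i
  have hsub := hsub i le_rfl
  generalize cfg i = c at *
  obtain ⟨⟨⟨p, t⟩, q, t'⟩, k'⟩ := c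
  obtain ⟨rfl, rfl⟩ : k' = k ∧ p = s k := by
    simpa using Reach.eq_of_le hsub.1 (Nat.succ_le_succ hi)
  obtain rfl : q = s k' := by simpa using Reach.eq_of_le hsub.2 le_rfl
  obtain ⟨-, rfl, rfl⟩ := hflank.1.trunk_and_sides_eq hE (by simp) hflank.2
  rfl

lemma OnewayRun.exists_strictMono_cfg_eq (hM : OnewayDet M) (hs : OnewayRun M w s)
    (hrun : IsRun M.outlineAut w cfg tr) :
    ∃ g : ℕ → ℕ, StrictMono g ∧ ∀ k, cfg (g k) = (surround (s k), k) := by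
  have hex : ∀ k, ∃ i, k ≤ (cfg i).2 := fun k ↦
    ((hM.tendsto_position hrun).eventually_ge_atTop k).exists
  have hcfg : ∀ k, cfg (Nat.find (hex k)) = (surround (s k), k) := fun k ↦
    hs.cfg_eq_surround hM hrun (Nat.find_spec (hex k)) fun l hl ↦
      not_le.1 (Nat.find_min (hex k) hl)
  refine ⟨fun k ↦ Nat.find (hex k), strictMono_nat_of_lt_succ fun k ↦ lt_of_le_of_ne ?_ ?_, hcfg⟩
  · exact Nat.find_mono fun i hi ↦ k.le_succ.trans hi
  · intro heq
    have := (hcfg k).symm.trans ((congrArg cfg heq).trans (hcfg (k + 1)))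
    simp at this

lemma OnewayRun.exists_simulated_eq_extend (hM : OnewayDet M) (hs : OnewayRun M w s)
    (hrun : IsRun M.outlineAut w cfg tr) :
    ∃ g : ℕ → ℕ, StrictMono g ∧ M.simulated ∘ tr =
      Function.extend g (some ∘ transitions s w) fun _ ↦ none := by
  have hE := hM.forest_rightUnique w
  obtain ⟨g, hg, hcfg⟩ := hs.exists_strictMono_cfg_eq hM hrun
  refine ⟨g, hg, funext fun i ↦ ?_⟩
  obtain ⟨j, htr, -, hj, -⟩ := stepVia_iff.1 (hrun.2 i)
  by_cases hi : i ∈ Set.range g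
  · obtain ⟨k, rfl⟩ := hi
    rw [hg.injective.extend_apply, Function.comp_apply, Function.comp_apply,
      simulated_eq_some_iff hM, htr, hcfg]
    rw [hcfg] at hj
    obtain rfl : j = k + 1 := by simpa [OnewayAut.outlineAut, Forward, surround] using hj
    exact ⟨hs.2 k, rfl, rfl⟩
  · rw [Function.extend_apply' _ _ _ hi, Function.comp_apply, Option.eq_none_iff_forall_ne_some]
    rintro ⟨p, a, r⟩ hsim
    obtain ⟨-, hp, -⟩ := (simulated_eq_some_iff hM).1 hsim
    have hflank := hM.flanked_run hrun i
    have hcfgi : cfg i = (surround p, (cfg i).2) := Prod.ext (by rw [← hp, htr]) rfl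
    rw [hcfgi] at hflank
    obtain ⟨htrunk, -⟩ := hflank.1.trunk_and_sides_eq hE (by simp) hflank.2
    obtain rfl : p = s (cfg i).2 :=
      congrArg Prod.snd (htrunk.eq hE ((onewayRun_iff_trunk hM).1 hs _) rfl)
    exact hi ⟨_, hM.run_injective hrun ((hcfg _).trans hcfgi.symm)⟩

lemma OnewayDet.infOften_letter (hM : OnewayDet M) (hrun : IsRun M.outlineAut w cfg tr)
    {t : HeadPair M.Q × Option A × HeadPair M.Q} (ht : InfOften tr t) :
    ∃ a, t.2.1 = some a ∧ InfOften w a := by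
  have hletter : ∀ n, ∃ l ≥ n, t.2.1 = some (w l) := by
    intro n
    obtain ⟨N, hN⟩ := eventually_atTop.1 ((hM.tendsto_position hrun).eventually_gt_atTop n)
    obtain ⟨i, hi, rfl⟩ := ht N
    have hpos := hN i hi
    obtain ⟨j, htr, -, hj, -⟩ := stepVia_iff.1 (hrun.2 i)
    obtain ⟨l, rfl⟩ : ∃ l, j = l + 1 := ⟨j - 1, by omega⟩
    exact ⟨l, by omega, by rw [htr]; rfl⟩
  obtain ⟨l, -, hl⟩ := hletter 0
  refine ⟨w l, hl, fun n ↦ ?_⟩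
  obtain ⟨l', hn, hl'⟩ := hletter n
  exact ⟨l', hn, Option.some_injective _ (hl'.symm.trans hl)⟩

lemma OnewayDet.eq_of_simulated (hM : OnewayDet M)
    {t t' : HeadPair M.Q × Option A × HeadPair M.Q} {u : M.Q × A × M.Q}
    (ht : t ∈ M.outlineAut.Δ) (ht' : t' ∈ M.outlineAut.Δ) (h : M.simulated t = some u)
    (h' : M.simulated t' = some u) : t = t' := by
  obtain ⟨-, hsource, hletter⟩ := (simulated_eq_some_iff hM).1 h
  obtain ⟨-, hsource', hletter'⟩ := (simulated_eq_some_iff hM).1 h'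
  obtain ⟨x, a, y⟩ := t
  obtain ⟨x', a', y'⟩ := t'
  obtain rfl : x = x' := hsource.trans hsource'.symm
  obtain rfl : a = a' := hletter.trans hletter'.symm
  rw [hM.reversible_outlineAut.1 _ _ _ _ ht ht']

lemma OnewayDet.exists_infOften_simulated (hM : OnewayDet M) (hrun : IsRun M.outlineAut w cfg tr)
    {g : ℕ → ℕ} (hg : StrictMono g) {τ : ℕ → M.Q × A × M.Q}
    (hsim : M.simulated ∘ tr = Function.extend g (some ∘ τ) fun _ ↦ none) {u : M.Q × A × M.Q}
    (hu : InfOften τ u) : ∃ t, InfOften tr t ∧ M.simulated t = some u := by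
  have hgk : ∀ k, M.simulated (tr (g k)) = some (τ k) := fun k ↦
    (congrFun hsim (g k)).trans (hg.injective.extend_apply _ _ k)
  obtain ⟨k₀, -, rfl⟩ := hu 0
  refine ⟨tr (g k₀), fun n ↦ ?_, hgk k₀⟩
  obtain ⟨k, hk, heq⟩ := hu n
  exact ⟨g k, hk.trans hg.le_apply,
    hM.eq_of_simulated (hrun.2 _).1 (hrun.2 _).1 ((hgk k).trans (congrArg some heq)) (hgk k₀)⟩

end Transducer

section Equivalence

variable {A B : Type} {T : OnewayTrans A B} [LinearOrder T.Q] {w : ℕ → A} {s : ℕ → T.Q}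
  {cfg : ℕ → HeadPair T.Q × ℕ}
  {tr : ℕ → HeadPair T.Q × Option A × HeadPair T.Q}

lemma OnewayRun.parityCond_iff (hT : OnewayDet T.toOnewayAut) (hs : OnewayRun T.toOnewayAut w s)
    (hrun : IsRun T.outlineAut w cfg tr) :
    ParityCond T.outlineTrans.toParityAut tr ↔
      OnewayParityCond T.toOnewayAut (transitions s w) := by
  obtain ⟨g, hg, hsim⟩ := hs.exists_simulated_eq_extend hT hrun
  refine forall_congr' fun c ↦ iff_of_eq (congrArg Even (Eq.symm ?_))
  refine sInf_eq_sInf_of_subset ?_ ?_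
  · rintro _ ⟨u, hu, rfl⟩
    obtain ⟨t, ht, htu⟩ := hT.exists_infOften_simulated hrun hg hsim hu
    exact ⟨t, ht, by simp [OnewayTrans.outlineTrans, htu]⟩
  · rintro _ ⟨t, ht, rfl⟩
    cases htu : T.simulated t with
    | some u =>
      exact ⟨_, ⟨u, infOften_of_simulated hg hsim ht htu, rfl⟩,
        by simp [OnewayTrans.outlineTrans, htu]⟩
    | none =>
      obtain ⟨a, hta, ha⟩ := hT.infOften_letter hrun ht
      obtain ⟨p, r, hpr⟩ := ha.exists_triple (s := s)
      refine ⟨_, ⟨_, hpr, rfl⟩, ?_⟩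
      simpa [OnewayTrans.outlineTrans, htu, hta] using maxColor_le p r a

lemma OnewayRun.flattenTo_iff (hT : OnewayDet T.toOnewayAut) (hs : OnewayRun T.toOnewayAut w s)
    (hrun : IsRun T.outlineAut w cfg tr) {x : ℕ → B} :
    FlattenTo (fun i ↦ T.outlineTrans.out (tr i)) x ↔
      FlattenTo (fun i ↦ T.out (transitions s w i)) x := by
  obtain ⟨g, hg, hsim⟩ := hs.exists_simulated_eq_extend hT hrun
  have hout : (fun i ↦ T.outlineTrans.out (tr i)) =
      Function.extend g (fun i ↦ T.out (transitions s w i)) fun _ ↦ [] := by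
    funext i
    change (((T.simulated ∘ tr) i).elim [] T.out) = _
    rw [hsim]
    exact Function.apply_extend (fun o : Option _ ↦ o.elim [] T.out) g _ i
  rw [hout, flattenTo_extend_iff hg]

lemma OnewayDet.outlineTrans_realizes_iff (hT : OnewayDet T.toOnewayAut) {x : ℕ → B} :
    T.outlineTrans.Realizes w x ↔ T.Realizes w x := by
  constructor
  · rintro ⟨cfg, tr, hrun, -, hparity, hout⟩
    obtain ⟨s, hs⟩ := hT.exists_onewayRun hrun
    exact ⟨s, hs, (hs.parityCond_iff hT hrun).1 hparity, (hs.flattenTo_iff hT hrun).1 hout⟩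
  · rintro ⟨s, hs, hparity, hout⟩
    obtain ⟨cfg, tr, hrun⟩ := hs.exists_isRun hT
    exact ⟨cfg, tr, hrun, fun n ↦ ((hT.tendsto_position hrun).eventually_ge_atTop n).exists,
      (hs.parityCond_iff hT hrun).2 hparity, (hs.flattenTo_iff hT hrun).2 hout⟩

lemma card_outlineTrans : Fintype.card T.outlineTrans.Q = 4 * Fintype.card T.Q ^ 2 := by
  have hcard : Fintype.card T.outlineTrans.Q = Fintype.card (HeadPair T.Q) := rfl
  rw [hcard, Fintype.card_prod, Fintype.card_prod, Fintype.card_bool]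
  ring

end Equivalence

theorem odbt_to_rbt_general (A B : Type) (T : OnewayTrans A B) (n : ℕ)
    (hdet : OnewayDet T.toOnewayAut) (hn : Fintype.card T.Q = n) :
    ∃ T' : TwoWayTrans A B,
      Reversible T'.toTwoWayAut ∧
      Fintype.card T'.Q ≤ 4 * n ^ 2 ∧
      (∀ w x, T'.Realizes w x ↔ T.Realizes w x) := by
  let _ : LinearOrder T.Q := .lift' (Fintype.equivFin T.Q) (Fintype.equivFin T.Q).injective
  exact ⟨T.outlineTrans, hdet.reversible_outlineAut, hn ▸ card_outlineTrans.le,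
    fun _ _ ↦ hdet.outlineTrans_realizes_iff⟩

/-- Every one-way deterministic parity transducer `T` with `n` states is
equivalent to a reversible two-way parity transducer `T'` with at most `4n²` states. -/
theorem odbt_to_rbt (A B : Type) [Fintype A] [Fintype B]
    (T : OnewayTrans A B) (n : ℕ)
    (hdet : OnewayDet T.toOnewayAut) (hn : Fintype.card T.Q = n) :
    ∃ T' : TwoWayTrans A B,
      Reversible T'.toTwoWayAut ∧
      Fintype.card T'.Q ≤ 4 * n ^ 2 ∧
      (∀ w x, T'.Realizes w x ↔ T.Realizes w x) := by
  exact odbt_to_rbt_general A B T n hdet hn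

end Paper
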